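/- Let n ≥ 2, k ≥ 1, and let I^{(1)} ⊇ m^k ⊇ I^{(2)} be homogeneous m-primary ideals of R contained in m. Assume that T^{=d}(I^{(1)}, I^{(2)}) = 0 for every d ≤ −2 (i.e. the negative tangents of the pair are concentrated in degree −1). Then: (i) for every d ≥ 0 the forgetful map (φ_1, φ_k, φ_2) ↦ (φ_1, φ_2) restricts to a ℂ-linear isomorphism T^{=d}(I^{(1)}, m^k, I^{(2)}) ≅ T^{=d}(I^{(1)}, I^{(2)}); (ii) T^{=d}(I^{(1)}, m^k, I^{(2)}) = 0 for every d ≤ −2; (iii) there is a ℂ-linear isomorphism T^{=−1}(I^{(1)}, m^k, I^{(2)}) ≅ T^{=−1}(I^{(1)}, I^{(2)}) ⊕ Hom_ℂ(R_k/(I^{(2)} ∩ R_k), I^{(1)} ∩ R_{k−1}). -/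

import Mathlib

open MvPolynomial

noncomputable section
set_option synthInstance.maxHeartbeats 1000000
set_option maxHeartbeats 1000000

/-- `R n = ℂ[x_1, …, x_n]`. -/
abbrev R (n : ℕ) : Type := MvPolynomial (Fin n) ℂ

/-- `m = (x_1, …, x_n)`, the ideal generated by the variables. -/
def mId (n : ℕ) : Ideal (R n) := Ideal.span (Set.range MvPolynomial.X)

/-- `R_d`, the ℂ-subspace of homogeneous polynomials of degree `d`. -/
def Rdeg (n d : ℕ) : Submodule ℂ (R n) := homogeneousSubmodule (Fin n) ℂ d

open Classical in
/-- The canonical projection `R/p → R/q` (for `p ≤ q`); defined as `0` if `p ≰ q`. -/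
def proj {n : ℕ} (p q : Ideal (R n)) : (R n ⧸ p) →ₗ[R n] (R n ⧸ q) :=
  if h : p ≤ q then Submodule.mapQ p q LinearMap.id (fun _ hx => h hx) else 0

/-- Candidate tangent tuples for a pair of ideals. -/
abbrev TanCar2 (n : ℕ) (I1 I2 : Ideal (R n)) : Type :=
  (↥I1 →ₗ[R n] (R n ⧸ I1)) × (↥I2 →ₗ[R n] (R n ⧸ I2))

/-- Candidate tangent tuples for a triple of ideals. -/
abbrev TanCar3 (n : ℕ) (I1 K I2 : Ideal (R n)) : Type :=
  (↥I1 →ₗ[R n] (R n ⧸ I1)) × (↥K →ₗ[R n] (R n ⧸ K)) × (↥I2 →ₗ[R n] (R n ⧸ I2))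

/-- The tangent space `T(I^{(1)}, I^{(2)})` of a pair. -/
def pairT {n : ℕ} (I1 I2 : Ideal (R n)) : Submodule ℂ (TanCar2 n I1 I2) where
  carrier := { φ | ∀ (f : R n) (hf1 : f ∈ I1) (hf2 : f ∈ I2),
      φ.1 ⟨f, hf1⟩ = proj I2 I1 (φ.2 ⟨f, hf2⟩) }
  add_mem' := by
    intro a b ha hb f hf1 hf2
    simp only [Prod.fst_add, Prod.snd_add, LinearMap.add_apply, map_add,
      ha f hf1 hf2, hb f hf1 hf2]
  zero_mem' := by intro f hf1 hf2; simp
  smul_mem' := by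
    intro c a ha f hf1 hf2
    simp only [Prod.smul_fst, Prod.smul_snd, LinearMap.smul_apply,
      LinearMap.map_smul_of_tower, ha f hf1 hf2]

/-- The tangent space `T(I^{(1)}, K, I^{(2)})` of a triple. -/
def tripleT {n : ℕ} (I1 K I2 : Ideal (R n)) : Submodule ℂ (TanCar3 n I1 K I2) where
  carrier := { φ |
      (∀ (f : R n) (hf1 : f ∈ I1) (hfK : f ∈ K),
        φ.1 ⟨f, hf1⟩ = proj K I1 (φ.2.1 ⟨f, hfK⟩)) ∧
      (∀ (f : R n) (hfK : f ∈ K) (hf2 : f ∈ I2),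
        φ.2.1 ⟨f, hfK⟩ = proj I2 K (φ.2.2 ⟨f, hf2⟩)) }
  add_mem' := by
    intro a b ha hb
    refine ⟨fun f hf1 hfK => ?_, fun f hfK hf2 => ?_⟩
    · simp only [Prod.fst_add, Prod.snd_add, LinearMap.add_apply, map_add,
        ha.1 f hf1 hfK, hb.1 f hf1 hfK]
    · simp only [Prod.fst_add, Prod.snd_add, LinearMap.add_apply, map_add,
        ha.2 f hfK hf2, hb.2 f hfK hf2]
  zero_mem' := by
    refine ⟨fun f hf1 hfK => ?_, fun f hfK hf2 => ?_⟩ <;> simp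
  smul_mem' := by
    intro c a ha
    refine ⟨fun f hf1 hfK => ?_, fun f hfK hf2 => ?_⟩
    · simp only [Prod.smul_fst, Prod.smul_snd, LinearMap.smul_apply,
        LinearMap.map_smul_of_tower, ha.1 f hf1 hfK]
    · simp only [Prod.smul_fst, Prod.smul_snd, LinearMap.smul_apply,
        LinearMap.map_smul_of_tower, ha.2 f hfK hf2]

open Classical in
/-- The image of `R_{e+d}` in `R/I` (interpreted as `0` when `e + d < 0`). -/
def gradedImage {n : ℕ} (I : Ideal (R n)) (e : ℕ) (d : ℤ) : Submodule ℂ (R n ⧸ I) :=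
  if h : 0 ≤ (e : ℤ) + d then
    Submodule.map (Ideal.Quotient.mkₐ ℂ I).toLinearMap (Rdeg n ((e : ℤ) + d).toNat)
  else ⊥

/-- The property that a tangent vector `φ ∈ Hom_R(I, R/I)` is homogeneous of degree `d`:
for every `e ≥ 0` and every homogeneous `f ∈ I ∩ R_e`, `φ(f)` lies in the image of
`R_{e+d}` in `R/I`. -/
def gradedHom {n : ℕ} (I : Ideal (R n)) (d : ℤ) (φ : ↥I →ₗ[R n] (R n ⧸ I)) : Prop :=
  ∀ (e : ℕ) (f : R n) (hf : f ∈ I), f ∈ Rdeg n e → φ ⟨f, hf⟩ ∈ gradedImage I e d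

/-- The degree-`d` part `T^{=d}(I^{(1)}, I^{(2)})` of the tangent space of a pair of
homogeneous ideals. -/
def pairTgr {n : ℕ} (I1 I2 : Ideal (R n)) (d : ℤ) : Submodule ℂ (TanCar2 n I1 I2) :=
  pairT I1 I2 ⊓
    { carrier := { φ | gradedHom I1 d φ.1 ∧ gradedHom I2 d φ.2 }
      add_mem' := by
        intro a b ha hb
        refine ⟨fun e f hf hfe => ?_, fun e f hf hfe => ?_⟩
        · exact Submodule.add_mem _ (ha.1 e f hf hfe) (hb.1 e f hf hfe)
        · exact Submodule.add_mem _ (ha.2 e f hf hfe) (hb.2 e f hf hfe)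
      zero_mem' := by
        refine ⟨fun e f hf hfe => ?_, fun e f hf hfe => ?_⟩ <;>
          exact Submodule.zero_mem _
      smul_mem' := by
        intro c a ha
        refine ⟨fun e f hf hfe => ?_, fun e f hf hfe => ?_⟩
        · exact Submodule.smul_mem _ c (ha.1 e f hf hfe)
        · exact Submodule.smul_mem _ c (ha.2 e f hf hfe) }

/-- The degree-`d` part `T^{=d}(I^{(1)}, K, I^{(2)})` of the tangent space of a triple of
homogeneous ideals. -/
def tripleTgr {n : ℕ} (I1 K I2 : Ideal (R n)) (d : ℤ) : Submodule ℂ (TanCar3 n I1 K I2) :=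
  tripleT I1 K I2 ⊓
    { carrier := { φ | gradedHom I1 d φ.1 ∧ gradedHom K d φ.2.1 ∧ gradedHom I2 d φ.2.2 }
      add_mem' := by
        intro a b ha hb
        refine ⟨fun e f hf hfe => ?_, fun e f hf hfe => ?_, fun e f hf hfe => ?_⟩
        · exact Submodule.add_mem _ (ha.1 e f hf hfe) (hb.1 e f hf hfe)
        · exact Submodule.add_mem _ (ha.2.1 e f hf hfe) (hb.2.1 e f hf hfe)
        · exact Submodule.add_mem _ (ha.2.2 e f hf hfe) (hb.2.2 e f hf hfe)
      zero_mem' := by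
        refine ⟨fun e f hf hfe => ?_, fun e f hf hfe => ?_, fun e f hf hfe => ?_⟩ <;>
          exact Submodule.zero_mem _
      smul_mem' := by
        intro c a ha
        refine ⟨fun e f hf hfe => ?_, fun e f hf hfe => ?_, fun e f hf hfe => ?_⟩
        · exact Submodule.smul_mem _ c (ha.1 e f hf hfe)
        · exact Submodule.smul_mem _ c (ha.2.1 e f hf hfe)
        · exact Submodule.smul_mem _ c (ha.2.2 e f hf hfe) }


theorem proj_mk {n : ℕ} {p q : Ideal (R n)} (h : p ≤ q) (x : R n) :
    proj p q (Ideal.Quotient.mk p x) = Ideal.Quotient.mk q x := by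
  unfold proj
  rw [dif_pos h]
  rfl

theorem proj_proj {n : ℕ} {p q r : Ideal (R n)} (h : p ≤ q) (h' : q ≤ r) (x : R n ⧸ p) :
    proj q r (proj p q x) = proj p r x := by
  obtain ⟨y, rfl⟩ := Ideal.Quotient.mk_surjective x
  rw [proj_mk h, proj_mk h', proj_mk (h.trans h')]

theorem mem_K {n k : ℕ} (f : R n) :
    f ∈ mId n ^ k ↔ ∀ x : Fin n →₀ ℕ, x.degree < k → f.coeff x = 0 :=
  MvPolynomial.mem_pow_idealOfVars_iff' k f

theorem Rdeg_le_K {n k e : ℕ} (h : k ≤ e) {f : R n} (hf : f ∈ Rdeg n e) : f ∈ mId n ^ k := by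
  rw [mem_K]
  intro x hx
  by_contra hne
  have := (show f.IsHomogeneous e from hf) hne
  replace this : x.degree = e := by rw [Finsupp.degree_eq_weight_one]; exact this
  omega

theorem K_inf_Rdeg {n k e : ℕ} (h : e < k) {f : R n} (hf : f ∈ Rdeg n e) (hK : f ∈ mId n ^ k) :
    f = 0 := by
  ext x
  by_contra hne
  have := (show f.IsHomogeneous e from hf) hne
  replace this : x.degree = e := by rw [Finsupp.degree_eq_weight_one]; exact this
  exact hne (by simpa using (mem_K f).1 hK x (by omega))

theorem K_hom {n k : ℕ} : ∀ f ∈ mId n ^ k, ∀ e : ℕ, homogeneousComponent e f ∈ mId n ^ k := by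
  intro f hf e
  rw [mem_K] at hf ⊢
  intro x hx
  rw [coeff_homogeneousComponent]
  split_ifs
  · exact hf x hx
  · rfl

theorem hom_induct {n : ℕ} {J : Ideal (R n)}
    (hJ : ∀ f ∈ J, ∀ e : ℕ, homogeneousComponent e f ∈ J) (P : R n → Prop) (h0 : P 0)
    (hadd : ∀ f ∈ J, ∀ g ∈ J, P f → P g → P (f + g))
    (hhom : ∀ e : ℕ, ∀ f ∈ J, f ∈ Rdeg n e → P f) : ∀ f ∈ J, P f := by
  intro f hf
  rw [← sum_homogeneousComponent f]
  have : ∀ s : Finset ℕ, (∑ i ∈ s, homogeneousComponent i f) ∈ J ∧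
      P (∑ i ∈ s, homogeneousComponent i f) := by
    intro s
    induction s using Finset.induction_on with
    | empty => simpa using h0
    | insert a s ha ih =>
      rw [Finset.sum_insert ha]
      exact ⟨J.add_mem (hJ f hf a) ih.1, hadd _ (hJ f hf a) _ ih.1
        (hhom a _ (hJ f hf a) (homogeneousComponent_mem a f)) ih.2⟩
  exact (this _).2

theorem mem_gradedImage {n : ℕ} {I : Ideal (R n)} {e : ℕ} {d : ℤ} {y : R n ⧸ I}
    (hy : y ∈ gradedImage I e d) : ∃ g ∈ Rdeg n ((e : ℤ) + d).toNat,
      Ideal.Quotient.mk I g = y ∧ ((e : ℤ) + d < 0 → g = 0) := by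
  unfold gradedImage at hy
  split_ifs at hy with h
  · obtain ⟨g, hg, rfl⟩ := hy
    exact ⟨g, hg, rfl, fun h' => absurd h (by omega)⟩
  · rw [Submodule.mem_bot] at hy
    exact ⟨0, Submodule.zero_mem _, by simp [hy], fun _ => rfl⟩

theorem gradedImage_zero {n k : ℕ} {I : Ideal (R n)} (hI : mId n ^ k ≤ I) {e : ℕ} {d : ℤ}
    (h : (k : ℤ) ≤ e + d) {y : R n ⧸ I} (hy : y ∈ gradedImage I e d) : y = 0 := by
  obtain ⟨g, hg, rfl, -⟩ := mem_gradedImage hy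
  exact Ideal.Quotient.eq_zero_iff_mem.2 (hI (Rdeg_le_K (by omega) hg))

/-- The extension of a linear map `R_k → R_{k-1}` to a tangent vector at `m^k`. -/
def ext0 {n k : ℕ} (ψ : ↥(Rdeg n k) →ₗ[ℂ] ↥(Rdeg n (k - 1))) :
    R n →ₗ[ℂ] R n :=
  (Rdeg n (k - 1)).subtype ∘ₗ ψ ∘ₗ
    LinearMap.codRestrict (Rdeg n k) (homogeneousComponent k) (fun f => homogeneousComponent_mem k f)

theorem ext0_mem {n k : ℕ} (ψ : ↥(Rdeg n k) →ₗ[ℂ] ↥(Rdeg n (k - 1))) (f : R n) :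
    ext0 ψ f ∈ Rdeg n (k - 1) := (ψ _).2

theorem ext0_apply {n k : ℕ} (ψ : ↥(Rdeg n k) →ₗ[ℂ] ↥(Rdeg n (k - 1))) (f : R n)
    (hf : f ∈ Rdeg n k) : ext0 ψ f = ψ ⟨f, hf⟩ := by
  have : LinearMap.codRestrict (Rdeg n k) (homogeneousComponent k)
      (fun f => homogeneousComponent_mem k f) f = ⟨f, hf⟩ := by
    ext1
    exact homogeneousComponent_eq_self hf
  simp only [ext0, LinearMap.comp_apply, this, Submodule.subtype_apply]

theorem ext0_zero {n k : ℕ} (ψ : ↥(Rdeg n k) →ₗ[ℂ] ↥(Rdeg n (k - 1))) (f : R n)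
    (hf : homogeneousComponent k f = 0) : ext0 ψ f = 0 := by
  have : LinearMap.codRestrict (Rdeg n k) (homogeneousComponent k)
      (fun f => homogeneousComponent_mem k f) f = 0 := by
    ext1
    exact hf
  simp only [ext0, LinearMap.comp_apply, this, map_zero]

theorem sub_C_mem {n : ℕ} (r : R n) : r - C (r.coeff 0) ∈ mId n := by
  rw [← pow_one (mId n), mem_K]
  intro x hx
  have : x = 0 := by
    rw [← Finsupp.degree_eq_zero_iff]; omega
  subst this
  simp

/-- The tangent vector at `m^k` defined by a linear map `R_k → R_{k-1}`. -/
def extK {n k : ℕ} (hk : 1 ≤ k) (ψ : ↥(Rdeg n k) →ₗ[ℂ] ↥(Rdeg n (k - 1))) :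
    ↥(mId n ^ k) →ₗ[R n] (R n ⧸ (mId n ^ k)) where
  toFun f := Ideal.Quotient.mk _ (ext0 ψ f)
  map_add' a b := by simp
  map_smul' r f := by
    obtain ⟨f, hf⟩ := f
    have h1 : r * f = r.coeff 0 • f + (r - C (r.coeff 0)) * f := by
      rw [MvPolynomial.smul_eq_C_mul]; ring
    have h2 : (r - C (r.coeff 0)) * f ∈ mId n ^ (k + 1) := by
      rw [pow_succ']
      exact Ideal.mul_mem_mul (sub_C_mem r) hf
    have h3 : ext0 ψ ((r - C (r.coeff 0)) * f) = 0 := by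
      apply ext0_zero
      exact K_inf_Rdeg (Nat.lt_succ_self k) (homogeneousComponent_mem k _) (K_hom _ h2 k)
    have h4 : ext0 ψ (r * f) = r.coeff 0 • ext0 ψ f := by
      rw [h1, map_add, map_smul, h3, add_zero]
    change Ideal.Quotient.mk _ (ext0 ψ (r * f)) = Ideal.Quotient.mk _ (r * ext0 ψ f)
    rw [h4, eq_comm, Ideal.Quotient.eq, MvPolynomial.smul_eq_C_mul, ← sub_mul]
    have := Ideal.mul_mem_mul (sub_C_mem r) (Rdeg_le_K le_rfl (ext0_mem ψ f))
    rwa [← pow_succ', Nat.sub_add_cancel hk] at this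

theorem extK_apply {n k : ℕ} (hk : 1 ≤ k) (ψ : ↥(Rdeg n k) →ₗ[ℂ] ↥(Rdeg n (k - 1))) (f : R n)
    (hf : f ∈ mId n ^ k) : extK hk ψ ⟨f, hf⟩ = Ideal.Quotient.mk _ (ext0 ψ f) := rfl

theorem extK_graded {n k : ℕ} (hk : 1 ≤ k) (ψ : ↥(Rdeg n k) →ₗ[ℂ] ↥(Rdeg n (k - 1))) :
    gradedHom (mId n ^ k) (-1) (extK hk ψ) := by
  intro e f hf hfe
  rw [extK_apply]
  by_cases h : e = k
  · subst h
    unfold gradedImage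
    rw [dif_pos (by omega), show ((e : ℤ) + -1).toNat = e - 1 by omega]
    exact ⟨_, ext0_mem ψ f, rfl⟩
  · rw [ext0_zero ψ f, map_zero]
    · exact Submodule.zero_mem _
    · rw [homogeneousComponent_of_mem hfe, if_neg (Ne.symm h)]

/-! Rigidity in degrees `≤ -2`. -/

theorem chain {n k : ℕ} (q : (Fin n →₀ ℕ) → R n)
    (hq : ∀ g : Fin n →₀ ℕ, g.degree + 1 = k → ∀ i j,
      X i * q (g + Finsupp.single j 1) = X j * q (g + Finsupp.single i 1)) :
    ∀ s : ℕ, ∀ c a b : Fin n →₀ ℕ, c.degree + s = k → a.degree = s → b.degree = s →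
      monomial b 1 * q (c + a) = monomial a 1 * q (c + b) := by
  intro s
  have key : ∀ (s : ℕ) (a : Fin n →₀ ℕ), a.degree = s + 1 → ∃ a' i,
      a = a' + Finsupp.single i 1 ∧ a'.degree = s := by
    intro s a ha
    obtain ⟨i, hi⟩ : ∃ i, a i ≠ 0 := by
      by_contra hcon
      push Not at hcon
      have : a = 0 := by ext i; exact hcon i
      simp [this] at ha
    have h := Finsupp.sub_add_single_one_cancel hi
    refine ⟨a - Finsupp.single i 1, i, h.symm, ?_⟩
    have := congrArg Finsupp.degree h
    rw [map_add, Finsupp.degree_single] at this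
    omega
  induction s with
  | zero =>
    intro c a b _ ha hb
    rw [(Finsupp.degree_eq_zero_iff a).1 ha, (Finsupp.degree_eq_zero_iff b).1 hb]
  | succ s ih =>
    intro c a b hc ha hb
    obtain ⟨a', i, rfl, ha'⟩ := key s a ha
    obtain ⟨b', j, rfl, hb'⟩ := key s b hb
    have e1 : ∀ (a : Fin n →₀ ℕ) i, (monomial (a + Finsupp.single i 1) (1 : ℂ)) =
        X i * monomial a 1 := by
      intro a i
      rw [X, monomial_mul, one_mul, add_comm]
    have h1 := ih (c + Finsupp.single i 1) a' b' (by
      rw [map_add, Finsupp.degree_single]; omega) ha' hb'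
    have h2 := hq (c + b') (by rw [map_add]; omega) i j
    rw [e1, e1]
    rw [show c + (a' + Finsupp.single i 1) = c + Finsupp.single i 1 + a' by abel,
      show c + (b' + Finsupp.single j 1) = c + b' + Finsupp.single j 1 by abel, mul_assoc, h1,
      show c + Finsupp.single i 1 + b' = c + b' + Finsupp.single i 1 by abel]
    linear_combination (-monomial a' (1 : ℂ)) * h2

theorem rigid {n k : ℕ} (hn : 2 ≤ n) (q : (Fin n →₀ ℕ) → R n)
    (hq : ∀ g : Fin n →₀ ℕ, g.degree + 1 = k → ∀ i j,
      X i * q (g + Finsupp.single j 1) = X j * q (g + Finsupp.single i 1))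
    (hdeg : ∀ a, a.degree = k → q a ≠ 0 → (q a).totalDegree < k) :
    ∀ a, a.degree = k → q a = 0 := by
  have hch := chain q hq k 0
  simp only [map_zero, zero_add, forall_const] at hch
  let i0 : Fin n := ⟨0, by omega⟩
  let i1 : Fin n := ⟨1, by omega⟩
  have hne : i0 ≠ i1 := by simp [i0, i1]
  have h0 : q (Finsupp.single i0 k) = 0 := by
    by_contra hnz
    have h := hch (Finsupp.single i0 k) (Finsupp.single i1 k) (by simp) (by simp)
    rw [← X_pow_eq_monomial, ← X_pow_eq_monomial] at h
    have hp : Prime (X i0 : R n) := X_prime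
    have hnd : ¬ (X i0 : R n) ∣ X i1 ^ k := by
      intro hd
      have := hp.dvd_of_dvd_pow hd
      rw [X_dvd_X] at this
      simp_all
    have hd := hp.pow_dvd_of_dvd_mul_left k hnd ⟨_, h⟩
    obtain ⟨t, ht⟩ := hd
    have ht0 : t ≠ 0 := by rintro rfl; simp [ht] at hnz
    have hlt := hdeg _ (by simp) hnz
    rw [ht, totalDegree_mul_of_isDomain (pow_ne_zero _ hp.ne_zero) ht0, totalDegree_X_pow] at hlt
    omega
  intro a ha
  have h := hch a (Finsupp.single i0 k) ha (by simp)
  rw [h0, mul_zero] at h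
  exact (mul_eq_zero.1 h).resolve_left (by simp)

theorem K_rigid {n k : ℕ} (hn : 2 ≤ n) {d : ℤ} (hd : d ≤ -2)
    (φ : ↥(mId n ^ k) →ₗ[R n] (R n ⧸ (mId n ^ k))) (hφ : gradedHom (mId n ^ k) d φ) : φ = 0 := by
  have hmon : ∀ a : Fin n →₀ ℕ, (monomial a (1 : ℂ)) ∈ Rdeg n a.degree := fun a =>
    isHomogeneous_monomial _ rfl
  have hmK : ∀ a : Fin n →₀ ℕ, k ≤ a.degree → (monomial a (1 : ℂ)) ∈ mId n ^ k := fun a ha =>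
    Rdeg_le_K ha (hmon a)
  have hex : ∀ a : Fin n →₀ ℕ, ∃ g : R n, ∀ h : a.degree = k,
      g ∈ Rdeg n ((k : ℤ) + d).toNat ∧ Ideal.Quotient.mk _ g = φ ⟨_, hmK a h.ge⟩ ∧
      ((k : ℤ) + d < 0 → g = 0) := by
    intro a
    by_cases h : a.degree = k
    · obtain ⟨g, h1, h2, h3⟩ := mem_gradedImage (hφ _ _ (hmK a h.ge) (hmon a))
      rw [h] at h1 h3
      exact ⟨g, fun _ => ⟨h1, h2, h3⟩⟩
    · exact ⟨0, fun h' => absurd h' h⟩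
  choose q hq using hex
  have hz : ∀ a, a.degree = k → q a = 0 := by
    apply rigid hn q
    · intro g hg i j
      have hd1 : ∀ i, (g + Finsupp.single i 1).degree = k := by
        intro i; rw [map_add, Finsupp.degree_single]; omega
      obtain ⟨hi1, hi2, hi3⟩ := hq _ (hd1 i)
      obtain ⟨hj1, hj2, hj3⟩ := hq _ (hd1 j)
      by_cases hneg : (k : ℤ) + d < 0
      · rw [hi3 hneg, hj3 hneg]; simp
      rw [← sub_eq_zero]
      apply K_inf_Rdeg (e := ((k : ℤ) + d).toNat + 1) (k := k) (by omega)
      · rw [add_comm]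
        exact Submodule.sub_mem _ ((isHomogeneous_X ℂ i).mul hj1) ((isHomogeneous_X ℂ j).mul hi1)
      · rw [← Ideal.Quotient.eq, map_mul, map_mul, hi2, hj2]
        change (X i : R n) • φ _ = (X j : R n) • φ _
        rw [← map_smul, ← map_smul]
        congr 1
        ext1
        change X i * monomial (g + Finsupp.single j 1) (1 : ℂ) =
          X j * monomial (g + Finsupp.single i 1) (1 : ℂ)
        rw [X, X, monomial_mul, monomial_mul]
        congr 2
        abel
    · intro a ha hne
      obtain ⟨h1, h2, h3⟩ := hq a ha
      have : ¬ (k : ℤ) + d < 0 := fun h => hne (h3 h)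
      have := (show (q a).IsHomogeneous _ from h1).totalDegree_le
      omega
  have hker : ∀ f (hf : f ∈ mId n ^ k), φ ⟨f, hf⟩ = 0 := by
    have hle : mId n ^ k ≤ (LinearMap.ker φ).map (Submodule.subtype _) := by
      have hs := MvPolynomial.pow_idealOfVars_eq_span (σ := Fin n) (R := ℂ) k
      change mId n ^ k = _ at hs
      conv_lhs => rw [hs]
      rw [Ideal.span_le]
      rintro _ ⟨a, ha, rfl⟩
      have ha' : a.degree = k := ha
      refine ⟨⟨_, hmK a ha'.ge⟩, ?_, rfl⟩
      obtain ⟨h1, h2, h3⟩ := hq a ha'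
      change φ _ = 0
      rw [← h2, hz a ha', map_zero]
    intro f hf
    obtain ⟨g, hg, rfl⟩ := hle hf
    exact hg
  ext1 ⟨f, hf⟩
  exact hker f hf

theorem inj_of {A B : Type*} [AddCommMonoid A] [AddCommMonoid B] [Module ℂ A] [Module ℂ B]
    (f : A →ₗ[ℂ] B) (h : ∀ a, f a = 0 → a = 0) : Function.Injective f := by
  letI := Module.addCommMonoidToAddCommGroup ℂ (M := A)
  letI := Module.addCommMonoidToAddCommGroup ℂ (M := B)
  exact (injective_iff_map_eq_zero f).2 h

theorem split_of {A B H : Type*} [AddCommMonoid A] [AddCommMonoid B] [AddCommMonoid H]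
    [Module ℂ A] [Module ℂ B] [Module ℂ H] (f : H →ₗ[ℂ] A) (g : A →ₗ[ℂ] B)
    (hf : Function.Injective f) (hfg : Function.Exact f g) (hg : Function.Surjective g) :
    Nonempty (A ≃ₗ[ℂ] B × H) := by
  letI := Module.addCommMonoidToAddCommGroup ℂ (M := A)
  letI := Module.addCommMonoidToAddCommGroup ℂ (M := B)
  letI := Module.addCommMonoidToAddCommGroup ℂ (M := H)
  obtain ⟨l, hl⟩ := g.exists_rightInverse_of_surjective (LinearMap.range_eq_top.2 hg)
  have E := (Function.Exact.splitSurjectiveEquiv hfg hf ⟨l, hl⟩).1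
  exact ⟨E.trans (LinearEquiv.prodComm ℂ _ _)⟩

theorem mem_pairTgr {n : ℕ} {I1 I2 : Ideal (R n)} {d : ℤ} {φ : TanCar2 n I1 I2} :
    φ ∈ pairTgr I1 I2 d ↔ (∀ (f : R n) (hf1 : f ∈ I1) (hf2 : f ∈ I2),
      φ.1 ⟨f, hf1⟩ = proj I2 I1 (φ.2 ⟨f, hf2⟩)) ∧ gradedHom I1 d φ.1 ∧ gradedHom I2 d φ.2 :=
  Iff.rfl

theorem mem_tripleTgr {n : ℕ} {I1 K I2 : Ideal (R n)} {d : ℤ} {φ : TanCar3 n I1 K I2} :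
    φ ∈ tripleTgr I1 K I2 d ↔ ((∀ (f : R n) (hf1 : f ∈ I1) (hfK : f ∈ K),
        φ.1 ⟨f, hf1⟩ = proj K I1 (φ.2.1 ⟨f, hfK⟩)) ∧
      (∀ (f : R n) (hfK : f ∈ K) (hf2 : f ∈ I2),
        φ.2.1 ⟨f, hfK⟩ = proj I2 K (φ.2.2 ⟨f, hf2⟩))) ∧
      gradedHom I1 d φ.1 ∧ gradedHom K d φ.2.1 ∧ gradedHom I2 d φ.2.2 :=
  Iff.rfl

theorem forget_mem {n : ℕ} {I1 K I2 : Ideal (R n)} (h1 : K ≤ I1) (h2 : I2 ≤ K) {d : ℤ}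
    {φ : TanCar3 n I1 K I2} (hφ : φ ∈ tripleTgr I1 K I2 d) :
    ((φ.1, φ.2.2) : TanCar2 n I1 I2) ∈ pairTgr I1 I2 d := by
  obtain ⟨⟨ha, hb⟩, g1, g2, g3⟩ := mem_tripleTgr.1 hφ
  refine mem_pairTgr.2 ⟨fun f hf1 hf2 => ?_, g1, g3⟩
  rw [← proj_proj h2 h1, ← hb f (h2 hf2) hf2, ← ha f hf1 (h2 hf2)]

/-- The forgetful map. -/
def forget {n : ℕ} {I1 K I2 : Ideal (R n)} (h1 : K ≤ I1) (h2 : I2 ≤ K) (d : ℤ) :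
    ↥(tripleTgr I1 K I2 d) →ₗ[ℂ] ↥(pairTgr I1 I2 d) where
  toFun φ := ⟨(φ.1.1, φ.1.2.2), forget_mem h1 h2 φ.2⟩
  map_add' _ _ := rfl
  map_smul' _ _ := rfl

theorem hom_eq {n : ℕ} {J : Ideal (R n)} {M : Type} [AddCommGroup M] [Module (R n) M]
    (hJ : ∀ f ∈ J, ∀ e : ℕ, homogeneousComponent e f ∈ J) (A B : ↥J →ₗ[R n] M)
    (h : ∀ e : ℕ, ∀ f (hf : f ∈ J), f ∈ Rdeg n e → A ⟨f, hf⟩ = B ⟨f, hf⟩) : A = B := by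
  have : ∀ f ∈ J, ∀ hf : f ∈ J, A ⟨f, hf⟩ = B ⟨f, hf⟩ := by
    apply hom_induct hJ
    · intro hf
      rw [show (⟨0, hf⟩ : ↥J) = 0 from rfl, map_zero, map_zero]
    · intro f hf g hg h1 h2 hfg
      rw [show (⟨f + g, hfg⟩ : ↥J) = ⟨f, hf⟩ + ⟨g, hg⟩ from rfl, map_add, map_add, h1, h2]
    · intro e f hf hfe _
      exact h e f hf hfe
  ext1 ⟨f, hf⟩
  exact this f hf hf

theorem deg_ge {n k e : ℕ} {f : R n} (hf : f ∈ mId n ^ k) (he : f ∈ Rdeg n e) :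
    f = 0 ∨ k ≤ e := by
  by_cases h : k ≤ e
  · exact Or.inr h
  · exact Or.inl (K_inf_Rdeg (by omega) he hf)

/-- Three maps on homogeneous elements: vanishing in high degree. -/
theorem graded_zero {n k : ℕ} {I : Ideal (R n)} (hI : mId n ^ k ≤ I) {d : ℤ} {e : ℕ}
    {φ : ↥I →ₗ[R n] (R n ⧸ I)} (hφ : gradedHom I d φ) {f : R n} (hf : f ∈ I)
    (hfe : f ∈ Rdeg n e) (h : f = 0 ∨ (k : ℤ) ≤ e + d) : φ ⟨f, hf⟩ = 0 := by
  rcases h with rfl | h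
  · exact map_zero φ
  · exact gradedImage_zero hI h (hφ e f hf hfe)

theorem proj_graded_zero {n k : ℕ} {I : Ideal (R n)} (hI : I ≤ mId n ^ k) {d : ℤ} {e : ℕ}
    {φ : ↥I →ₗ[R n] (R n ⧸ I)} (hφ : gradedHom I d φ) {f : R n} (hf : f ∈ I)
    (hfe : f ∈ Rdeg n e) (h : f = 0 ∨ (k : ℤ) ≤ e + d) : proj I (mId n ^ k) (φ ⟨f, hf⟩) = 0 := by
  rcases h with rfl | h
  · rw [show (⟨0, hf⟩ : ↥I) = 0 from rfl, map_zero, map_zero]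
  · obtain ⟨g, hg, hgy, -⟩ := mem_gradedImage (hφ e f hf hfe)
    rw [← hgy, proj_mk hI]
    exact Ideal.Quotient.eq_zero_iff_mem.2 (Rdeg_le_K (by omega) hg)

/-- Compatibility of `I1` and `K` components can be tested on homogeneous elements. -/
theorem compat1 {n : ℕ} {I J : Ideal (R n)} (hJI : J ≤ I)
    (hJ : ∀ f ∈ J, ∀ e : ℕ, homogeneousComponent e f ∈ J)
    (φ : ↥I →ₗ[R n] (R n ⧸ I)) (ψ : ↥J →ₗ[R n] (R n ⧸ J))
    (h : ∀ e : ℕ, ∀ f (hf : f ∈ J), f ∈ Rdeg n e → φ ⟨f, hJI hf⟩ = proj J I (ψ ⟨f, hf⟩)) :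
    ∀ (f : R n) (hf1 : f ∈ I) (hf2 : f ∈ J), φ ⟨f, hf1⟩ = proj J I (ψ ⟨f, hf2⟩) := by
  have := hom_eq hJ (φ ∘ₗ Submodule.inclusion hJI) (proj J I ∘ₗ ψ) h
  intro f hf1 hf2
  exact LinearMap.congr_fun this ⟨f, hf2⟩

theorem part1 {n k : ℕ} {I1 I2 : Ideal (R n)}
    (h1 : mId n ^ k ≤ I1) (h2 : I2 ≤ mId n ^ k)
    (hhom2 : ∀ f ∈ I2, ∀ e : ℕ, homogeneousComponent e f ∈ I2) {d : ℤ} (hd : 0 ≤ d) :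
    Function.Bijective (forget h1 h2 d) := by
  constructor
  · apply inj_of
    intro φ hφ
    obtain ⟨⟨φ1, φK, φ2⟩, hm⟩ := φ
    have e : ((φ1, φ2) : TanCar2 n I1 I2) = 0 := congrArg Subtype.val hφ
    obtain ⟨rfl, rfl⟩ := Prod.mk_eq_zero.1 e
    obtain ⟨⟨ha, hb⟩, g1, g2, g3⟩ := mem_tripleTgr.1 hm
    have : φK = 0 := by
      apply hom_eq K_hom
      intro e f hf hfe
      refine graded_zero le_rfl g2 hf hfe ((deg_ge hf hfe).imp id ?_)
      intro h; omega
    subst this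
    rfl
  · rintro ⟨⟨φ1, φ2⟩, hm⟩
    obtain ⟨ha, g1, g2⟩ := mem_pairTgr.1 hm
    refine ⟨⟨(φ1, 0, φ2), mem_tripleTgr.2 ⟨⟨?_, ?_⟩, g1, ?_, g2⟩⟩, rfl⟩
    · apply compat1 h1 K_hom
      intro e f hf hfe
      rw [LinearMap.zero_apply, map_zero]
      refine graded_zero h1 g1 (h1 hf) hfe ((deg_ge hf hfe).imp id ?_)
      intro h; omega
    · apply compat1 h2 hhom2
      intro e f hf hfe
      rw [LinearMap.zero_apply, eq_comm]
      refine proj_graded_zero h2 g2 hf hfe ((deg_ge (h2 hf) hfe).imp id ?_)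
      intro h; omega
    · intro e f hf hfe
      exact Submodule.zero_mem _

/-- `R_e → R/I` as a `ℂ`-linear map. -/
def mkD {n : ℕ} (I : Ideal (R n)) (e : ℕ) : ↥(Rdeg n e) →ₗ[ℂ] (R n ⧸ I) :=
  (Ideal.Quotient.mkₐ ℂ I).toLinearMap ∘ₗ (Rdeg n e).subtype

theorem exists_section {n : ℕ} (I : Ideal (R n)) (e : ℕ) :
    ∃ s : (R n ⧸ I) →ₗ[ℂ] ↥(Rdeg n e), ∀ g ∈ Rdeg n e,
      Ideal.Quotient.mk I (s (Ideal.Quotient.mk I g)) = Ideal.Quotient.mk I g := by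
  obtain ⟨t, ht⟩ := (mkD I e).rangeRestrict.exists_rightInverse_of_surjective
    (LinearMap.range_rangeRestrict _)
  obtain ⟨s, hs⟩ := t.exists_extend
  refine ⟨s, fun g hg => ?_⟩
  have h1 := LinearMap.congr_fun hs ((mkD I e).rangeRestrict ⟨g, hg⟩)
  have h2 := LinearMap.congr_fun ht ((mkD I e).rangeRestrict ⟨g, hg⟩)
  have h3 := congrArg Subtype.val h2
  rw [LinearMap.comp_apply, ← h1] at h3
  exact h3

/-- Restriction of a tangent vector to `R_k`, as a `ℂ`-linear map. -/
def resD {n k : ℕ} {I : Ideal (R n)} (h1 : mId n ^ k ≤ I) (φ : ↥I →ₗ[R n] (R n ⧸ I)) :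
    ↥(Rdeg n k) →ₗ[ℂ] (R n ⧸ I) where
  toFun f := φ ⟨f, h1 (Rdeg_le_K le_rfl f.2)⟩
  map_add' a b := by rw [← map_add]; rfl
  map_smul' c a := by
    rw [RingHom.id_apply, ← LinearMap.map_smul_of_tower]; rfl

theorem exists_lift {n k : ℕ} (hk : 1 ≤ k) {I : Ideal (R n)} (h1 : mId n ^ k ≤ I)
    (φ : ↥I →ₗ[R n] (R n ⧸ I)) (hφ : gradedHom I (-1) φ) :
    ∃ ψ : ↥(Rdeg n k) →ₗ[ℂ] ↥(Rdeg n (k - 1)), ∀ f (hf : f ∈ Rdeg n k),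
      Ideal.Quotient.mk I (ψ ⟨f, hf⟩ : R n) = φ ⟨f, h1 (Rdeg_le_K le_rfl hf)⟩ := by
  obtain ⟨s, hs⟩ := exists_section I (k - 1)
  refine ⟨s ∘ₗ resD h1 φ, fun f hf => ?_⟩
  obtain ⟨g, hg, hgy, -⟩ := mem_gradedImage (hφ k f (h1 (Rdeg_le_K le_rfl hf)) hf)
  rw [show ((k : ℤ) + -1).toNat = k - 1 by omega] at hg
  change Ideal.Quotient.mk I (s (φ _) : R n) = φ _
  rw [← hgy]
  exact hs g hg

/-- `I2 ∩ R_k` as a subspace of `R_k`. -/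
abbrev sub2 {n : ℕ} (k : ℕ) (I2 : Ideal (R n)) : Submodule ℂ ↥(Rdeg n k) :=
  Submodule.comap (Rdeg n k).subtype (I2.restrictScalars ℂ)

theorem exists_lift2 {n k : ℕ} (hk : 1 ≤ k) {I : Ideal (R n)} (h2 : I ≤ mId n ^ k)
    (φ : ↥I →ₗ[R n] (R n ⧸ I)) (hφ : gradedHom I (-1) φ) :
    ∃ ψ : ↥(sub2 k I) →ₗ[ℂ] ↥(Rdeg n (k - 1)), ∀ f (hf : f ∈ sub2 k I),
      Ideal.Quotient.mk (mId n ^ k) (ψ ⟨f, hf⟩ : R n) = proj I (mId n ^ k) (φ ⟨f, hf⟩) := by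
  obtain ⟨s, hs⟩ := exists_section I (k - 1)
  let r : ↥(sub2 k I) →ₗ[ℂ] (R n ⧸ I) :=
    { toFun := fun f => φ ⟨f, f.2⟩
      map_add' := fun a b => by rw [← map_add]; rfl
      map_smul' := fun c a => by
        rw [RingHom.id_apply, ← LinearMap.map_smul_of_tower]; rfl }
  refine ⟨s ∘ₗ r, fun f hf => ?_⟩
  obtain ⟨g, hg, hgy, -⟩ := mem_gradedImage (hφ k f hf f.2)
  rw [show ((k : ℤ) + -1).toNat = k - 1 by omega] at hg
  have h := hs g hg
  rw [hgy] at h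
  rw [← proj_mk h2]
  exact congrArg _ h

theorem surj {n k : ℕ} (hk : 1 ≤ k) {I1 I2 : Ideal (R n)}
    (h1 : mId n ^ k ≤ I1) (h2 : I2 ≤ mId n ^ k)
    (hhom2 : ∀ f ∈ I2, ∀ e : ℕ, homogeneousComponent e f ∈ I2) :
    Function.Surjective (forget h1 h2 (-1)) := by
  rintro ⟨⟨φ1, φ2⟩, hm⟩
  obtain ⟨ha, g1, g2⟩ := mem_pairTgr.1 hm
  obtain ⟨α, hα⟩ := exists_lift hk h1 φ1 g1
  obtain ⟨β, hβ⟩ := exists_lift2 hk h2 φ2 g2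
  obtain ⟨π, hπ⟩ : ∃ π : ↥(Rdeg n k) →ₗ[ℂ] ↥(sub2 k I2),
      π ∘ₗ (sub2 k I2).subtype = LinearMap.id :=
    LinearMap.exists_leftInverse_of_injective _ (Submodule.ker_subtype _)
  let ψ : ↥(Rdeg n k) →ₗ[ℂ] ↥(Rdeg n (k - 1)) := α + (β - α ∘ₗ (sub2 k I2).subtype) ∘ₗ π
  have hψ2 : ∀ f (hf : f ∈ sub2 k I2), ψ f = β ⟨f, hf⟩ := by
    intro f hf
    have : π f = ⟨f, hf⟩ := LinearMap.congr_fun hπ ⟨f, hf⟩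
    simp [ψ, this]
  have hβ1 : ∀ f : ↥(sub2 k I2), Ideal.Quotient.mk I1 (β f : R n) =
      φ1 ⟨f.1, h1 (h2 f.2)⟩ := by
    intro f
    rw [← proj_mk h1, hβ f.1 f.2, proj_proj h2 h1]
    exact (ha _ _ _).symm
  have hψ1 : ∀ f (hf : f ∈ Rdeg n k),
      Ideal.Quotient.mk I1 (ψ ⟨f, hf⟩ : R n) = φ1 ⟨f, h1 (Rdeg_le_K le_rfl hf)⟩ := by
    intro f hf
    have e : (ψ ⟨f, hf⟩ : R n) = (α ⟨f, hf⟩ : R n) + ((β (π ⟨f, hf⟩) : R n) -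
      (α (π ⟨f, hf⟩).1 : R n)) := rfl
    rw [e, map_add, map_sub, hα, hβ1]
    have := hα (π ⟨f, hf⟩).1.1 (π ⟨f, hf⟩).1.2
    rw [Subtype.coe_eta] at this
    rw [this, sub_self, add_zero]
  refine ⟨⟨(φ1, extK hk ψ, φ2), mem_tripleTgr.2 ⟨⟨?_, ?_⟩, g1, extK_graded hk ψ, g2⟩⟩, rfl⟩
  · apply compat1 h1 K_hom
    intro e f hf hfe
    change _ = proj _ _ (extK hk ψ ⟨f, hf⟩)
    rw [extK_apply, proj_mk h1]
    by_cases h : e = k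
    · subst h
      rw [ext0_apply ψ f hfe]
      exact (hψ1 f hfe).symm
    · rw [ext0_zero ψ f (by rw [homogeneousComponent_of_mem hfe, if_neg (Ne.symm h)]), map_zero]
      refine graded_zero h1 g1 (h1 hf) hfe ((deg_ge hf hfe).imp id ?_)
      intro h; omega
  · apply compat1 h2 hhom2
    intro e f hf hfe
    change extK hk ψ ⟨f, h2 hf⟩ = _
    rw [extK_apply]
    by_cases h : e = k
    · subst h
      rw [ext0_apply ψ f hfe, hψ2 ⟨f, hfe⟩ hf]
      exact hβ ⟨f, hfe⟩ hf
    · rw [ext0_zero ψ f (by rw [homogeneousComponent_of_mem hfe, if_neg (Ne.symm h)]), map_zero,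
        eq_comm]
      refine proj_graded_zero h2 g2 hf hfe ((deg_ge (h2 hf) hfe).imp id ?_)
      intro h; omega

/-- The linear map `R_k → R_{k-1}` attached to an element of
`Hom(R_k/(I2 ∩ R_k), I1 ∩ R_{k-1})`. -/
def toPsi {n k : ℕ} {I1 I2 : Ideal (R n)} :
    ((↥(Rdeg n k) ⧸ sub2 k I2) →ₗ[ℂ] ↥(I1.restrictScalars ℂ ⊓ Rdeg n (k - 1))) →ₗ[ℂ]
      (↥(Rdeg n k) →ₗ[ℂ] ↥(Rdeg n (k - 1))) where
  toFun h := Submodule.inclusion inf_le_right ∘ₗ h ∘ₗ (sub2 k I2).mkQ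
  map_add' _ _ := rfl
  map_smul' _ _ := rfl

theorem toPsi_apply {n k : ℕ} {I1 I2 : Ideal (R n)}
    (h : (↥(Rdeg n k) ⧸ sub2 k I2) →ₗ[ℂ] ↥(I1.restrictScalars ℂ ⊓ Rdeg n (k - 1)))
    (f : ↥(Rdeg n k)) : (toPsi h f : R n) = h ((sub2 k I2).mkQ f) := rfl

theorem ker_mem {n k : ℕ} (hk : 1 ≤ k) {I1 I2 : Ideal (R n)}
    (h1 : mId n ^ k ≤ I1) (h2 : I2 ≤ mId n ^ k)
    (hhom2 : ∀ f ∈ I2, ∀ e : ℕ, homogeneousComponent e f ∈ I2)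
    (h : (↥(Rdeg n k) ⧸ sub2 k I2) →ₗ[ℂ] ↥(I1.restrictScalars ℂ ⊓ Rdeg n (k - 1))) :
    ((0, extK hk (toPsi h), 0) : TanCar3 n I1 (mId n ^ k) I2) ∈
      tripleTgr I1 (mId n ^ k) I2 (-1) := by
  refine mem_tripleTgr.2 ⟨⟨?_, ?_⟩, fun e f hf hfe => Submodule.zero_mem _,
    extK_graded hk _, fun e f hf hfe => Submodule.zero_mem _⟩
  · apply compat1 h1 K_hom
    intro e f hf hfe
    change 0 = proj _ _ (extK hk (toPsi h) ⟨f, hf⟩)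
    rw [extK_apply, proj_mk h1]
    by_cases he : e = k
    · subst he
      rw [ext0_apply _ f hfe, toPsi_apply, eq_comm, Ideal.Quotient.eq_zero_iff_mem]
      exact (h _).2.1
    · rw [ext0_zero _ f (by rw [homogeneousComponent_of_mem hfe, if_neg (Ne.symm he)]), map_zero]
  · apply compat1 h2 hhom2
    intro e f hf hfe
    change extK hk (toPsi h) ⟨f, h2 hf⟩ = proj _ _ 0
    rw [extK_apply, map_zero]
    by_cases he : e = k
    · subst he
      rw [ext0_apply _ f hfe, toPsi_apply]
      have : (sub2 e I2).mkQ ⟨f, hfe⟩ = 0 := by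
        rw [Submodule.mkQ_apply, Submodule.Quotient.mk_eq_zero]
        exact hf
      rw [this, map_zero]
      exact map_zero _
    · rw [ext0_zero _ f (by rw [homogeneousComponent_of_mem hfe, if_neg (Ne.symm he)]), map_zero]

/-- The inclusion of the kernel of the forgetful map. -/
def kerIncl {n k : ℕ} (hk : 1 ≤ k) {I1 I2 : Ideal (R n)}
    (h1 : mId n ^ k ≤ I1) (h2 : I2 ≤ mId n ^ k)
    (hhom2 : ∀ f ∈ I2, ∀ e : ℕ, homogeneousComponent e f ∈ I2) :
    ((↥(Rdeg n k) ⧸ sub2 k I2) →ₗ[ℂ] ↥(I1.restrictScalars ℂ ⊓ Rdeg n (k - 1))) →ₗ[ℂ]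
      ↥(tripleTgr I1 (mId n ^ k) I2 (-1)) where
  toFun h := ⟨(0, extK hk (toPsi h), 0), ker_mem hk h1 h2 hhom2 h⟩
  map_add' a b := by
    apply Subtype.ext
    refine Prod.ext (add_zero _).symm (Prod.ext ?_ (add_zero _).symm)
    ext1 f
    rfl
  map_smul' c a := by
    apply Subtype.ext
    refine Prod.ext (smul_zero _).symm (Prod.ext ?_ (smul_zero _).symm)
    ext1 f
    rfl

theorem kerIncl_inj {n k : ℕ} (hk : 1 ≤ k) {I1 I2 : Ideal (R n)}
    (h1 : mId n ^ k ≤ I1) (h2 : I2 ≤ mId n ^ k)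
    (hhom2 : ∀ f ∈ I2, ∀ e : ℕ, homogeneousComponent e f ∈ I2) :
    Function.Injective (kerIncl hk h1 h2 hhom2) := by
  apply inj_of
  intro h hh
  have e : extK hk (toPsi h) = 0 := congrArg (fun x => x.1.2.1) hh
  apply LinearMap.ext
  intro x
  obtain ⟨⟨f, hf⟩, rfl⟩ := Submodule.mkQ_surjective _ x
  have e2 := LinearMap.congr_fun e ⟨f, Rdeg_le_K le_rfl hf⟩
  rw [extK_apply, LinearMap.zero_apply, Ideal.Quotient.eq_zero_iff_mem, ext0_apply _ f hf] at e2
  have e3 := K_inf_Rdeg (by omega) (toPsi h ⟨f, hf⟩).2 e2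
  apply Subtype.ext
  exact e3

theorem kerIncl_exact {n k : ℕ} (hk : 1 ≤ k) {I1 I2 : Ideal (R n)}
    (h1 : mId n ^ k ≤ I1) (h2 : I2 ≤ mId n ^ k)
    (hhom2 : ∀ f ∈ I2, ∀ e : ℕ, homogeneousComponent e f ∈ I2) :
    Function.Exact (kerIncl hk h1 h2 hhom2) (forget h1 h2 (-1)) := by
  intro φ
  constructor
  · intro hφ
    obtain ⟨⟨φ1, φK, φ2⟩, hm⟩ := φ
    have e : ((φ1, φ2) : TanCar2 n I1 I2) = 0 := congrArg Subtype.val hφ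
    obtain ⟨rfl, rfl⟩ := Prod.mk_eq_zero.1 e
    obtain ⟨⟨ha, hb⟩, g1, g2, g3⟩ := mem_tripleTgr.1 hm
    obtain ⟨ψ, hψ⟩ := exists_lift hk le_rfl φK g2
    have hψI : ∀ f, (ψ f : R n) ∈ I1.restrictScalars ℂ ⊓ Rdeg n (k - 1) := by
      intro f
      refine ⟨?_, (ψ f).2⟩
      have hK := Rdeg_le_K le_rfl f.2
      have := ha f.1 (h1 hK) hK
      change 0 = proj _ _ (φK _) at this
      rw [← hψ f.1 f.2, proj_mk h1, eq_comm, Ideal.Quotient.eq_zero_iff_mem] at this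
      exact this
    let ψ' : ↥(Rdeg n k) →ₗ[ℂ] ↥(I1.restrictScalars ℂ ⊓ Rdeg n (k - 1)) :=
      LinearMap.codRestrict _ ((Rdeg n (k - 1)).subtype ∘ₗ ψ) hψI
    have hker : sub2 k I2 ≤ LinearMap.ker ψ' := by
      intro f hf
      have hK := Rdeg_le_K le_rfl f.2
      have := hb f.1 hK hf
      change φK _ = proj _ _ 0 at this
      rw [← hψ f.1 f.2, map_zero, Ideal.Quotient.eq_zero_iff_mem] at this
      rw [LinearMap.mem_ker]
      apply Subtype.ext
      exact K_inf_Rdeg (by omega) (ψ f).2 this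
    refine ⟨(sub2 k I2).liftQ ψ' hker, ?_⟩
    apply Subtype.ext
    refine Prod.ext rfl (Prod.ext ?_ rfl)
    change extK hk (toPsi _) = φK
    have : toPsi ((sub2 k I2).liftQ ψ' hker) = ψ := by
      apply LinearMap.ext
      intro f
      apply Subtype.ext
      rfl
    rw [this]
    apply hom_eq K_hom
    intro e f hf hfe
    rw [extK_apply]
    by_cases he : e = k
    · subst he
      rw [ext0_apply _ f hfe]
      exact hψ f hfe
    · rw [ext0_zero _ f (by rw [homogeneousComponent_of_mem hfe, if_neg (Ne.symm he)]), map_zero,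
        eq_comm]
      refine graded_zero le_rfl g2 hf hfe ((deg_ge hf hfe).imp id ?_)
      intro h; omega
  · rintro ⟨h, rfl⟩
    rfl

/-- Let `n ≥ 2`, `k ≥ 1`, and let `I^{(1)} ⊇ m^k ⊇ I^{(2)}` be homogeneous
`m`-primary ideals contained in `m` with `T^{=d}(I^{(1)}, I^{(2)}) = 0` for all `d ≤ −2`.
Then: (i) for every `d ≥ 0` the forgetful map restricts to a ℂ-linear isomorphism
`T^{=d}(I^{(1)}, m^k, I^{(2)}) ≅ T^{=d}(I^{(1)}, I^{(2)})`; (ii) `T^{=d}(I^{(1)}, m^k, I^{(2)}) = 0`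
for every `d ≤ −2`; (iii) `T^{=−1}(I^{(1)}, m^k, I^{(2)}) ≅ T^{=−1}(I^{(1)}, I^{(2)}) ⊕
Hom_ℂ(R_k/(I^{(2)} ∩ R_k), I^{(1)} ∩ R_{k−1})`. -/
theorem graded_tangents_of_sandwich (n k : ℕ) (hn : 2 ≤ n) (hk : 1 ≤ k)
    (I1 I2 : Ideal (R n))
    (hI1K : mId n ^ k ≤ I1) (hKI2 : I2 ≤ mId n ^ k)
    (hhom1 : ∀ f ∈ I1, ∀ e : ℕ, homogeneousComponent e f ∈ I1)
    (hhom2 : ∀ f ∈ I2, ∀ e : ℕ, homogeneousComponent e f ∈ I2)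
    (hprim1 : ∃ N : ℕ, 1 ≤ N ∧ mId n ^ N ≤ I1)
    (hprim2 : ∃ N : ℕ, 1 ≤ N ∧ mId n ^ N ≤ I2)
    (hm1 : I1 ≤ mId n) (hm2 : I2 ≤ mId n)
    (hconc : ∀ d : ℤ, d ≤ -2 → pairTgr I1 I2 d = ⊥) :
    (∀ d : ℤ, 0 ≤ d →
      ∃ e : ↥(tripleTgr I1 (mId n ^ k) I2 d) ≃ₗ[ℂ] ↥(pairTgr I1 I2 d),
        ∀ φ : ↥(tripleTgr I1 (mId n ^ k) I2 d),
          (e φ : TanCar2 n I1 I2) = ((φ : TanCar3 n I1 (mId n ^ k) I2).1,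
            (φ : TanCar3 n I1 (mId n ^ k) I2).2.2)) ∧
    (∀ d : ℤ, d ≤ -2 → tripleTgr I1 (mId n ^ k) I2 d = ⊥) ∧
    Nonempty (↥(tripleTgr I1 (mId n ^ k) I2 (-1)) ≃ₗ[ℂ]
      ↥(pairTgr I1 I2 (-1)) ×
        ((↥(Rdeg n k) ⧸ Submodule.comap (Rdeg n k).subtype (I2.restrictScalars ℂ)) →ₗ[ℂ]
          ↥(I1.restrictScalars ℂ ⊓ Rdeg n (k - 1)))) := by
  refine ⟨fun d hd => ⟨LinearEquiv.ofBijective (forget hI1K hKI2 d)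
    (part1 hI1K hKI2 hhom2 hd), fun φ => rfl⟩, fun d hd => ?_, ?_⟩
  · rw [eq_bot_iff]
    intro φ hφ
    have h := forget_mem hI1K hKI2 hφ
    rw [hconc d hd, Submodule.mem_bot] at h
    obtain ⟨φ1, φK, φ2⟩ := φ
    obtain ⟨rfl, rfl⟩ := Prod.mk_eq_zero.1 h
    have := K_rigid hn hd φK (mem_tripleTgr.1 hφ).2.2.1
    subst this
    exact Submodule.zero_mem _
  · exact split_of _ _ (kerIncl_inj hk hI1K hKI2 hhom2) (kerIncl_exact hk hI1K hKI2 hhom2)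
      (surj hk hI1K hKI2 hhom2)

end
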